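/- There is a universal constant C with the following property. Let 0 < θ < π and 0 < ε < 1/2, and set D = 𝔻 ∖ {re^{it} : −θ ≤ t ≤ θ, 1−ε ≤ r < 1}, where 𝔻 is the open unit disc. Then every harmonic function u on D with 0 ≤ u ≤ 1 on D which has boundary limit 0 at every point of ∂D ∩ ∂𝔻 other than the two points e^{iθ} and e^{−iθ} satisfies u(0) ≤ θ/π + C ε log(1/ε). Equivalently, the harmonic measure of A = ∂D ∖ ∂𝔻 in D evaluated at 0 satisfies ω(0, A, D) ≤ θ/π + C ε log(1/ε). -/

import Mathlib

/-!
By the mean value property on the circle `|z| = 1 - 2ε`, which avoids the removed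
box, `u 0` is the average of `u ((1 - 2ε) e^{it})` over `0 ≤ t ≤ 2π`. The angles facing the box
contribute at most `θ/π`, because `u ≤ 1`. For any other angle `t`, let `m` be the angular distance
from `t` to `[-θ, θ]`; the disc of radius `s = m/π` about `e = e^{it}` does not meet the box, so
inside it `u` vanishes on the unit circle. There `u` is compared with the barrier
`log (|z - q| / s) / log √2`, where `q = (1 + s) e`: the disc `B(q, s)` is externally tangent to the
unit disc at `e`, hence the barrier is nonnegative on the unit disc, and it is at least `1` on the
part of `|z - e| = s` lying there (`norm_sub_sq_exterior`). The maximum principle gives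
`u ((1 - 2ε) e) ≤ log (1 + 2ε/s) / log √2 = O(ε/m)` (`barrier_bound`). Together with `u ≤ 1` this is
`O(ε/(m + ε))`, whose integral in `t` is `O(ε log (1/ε))`.

The two exceptional points `e^{±iθ}` never matter: they lie outside the open discs `B(e, s)`, and on
the boundary of those discs only `u ≤ 1` is used.
-/

open Complex Set Metric

noncomputable section

/-- `u` is harmonic on the open set `D`: it is continuous on `D` and satisfies the circle
mean-value property on every closed disc contained in `D`. -/
def HarmonicMVP (u : ℂ → ℝ) (D : Set ℂ) : Prop :=
  ContinuousOn u D ∧ ∀ c : ℂ, ∀ r : ℝ, 0 < r → closedBall c r ⊆ D →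
    u c = (2 * Real.pi)⁻¹ * ∫ θ in (0 : ℝ)..(2 * Real.pi),
      u (c + (r : ℂ) * Complex.exp ((θ : ℂ) * Complex.I))


/-! ### Maximum principle -/

/-- Maximum principle for functions with the mean value property. On `{f = max f}`, which is
compact, a point of largest real part contradicts the mean value property. -/
lemma HarmonicMVP.nonpos {f : ℂ → ℝ} {Ω : Set ℂ} (hf : HarmonicMVP f Ω) (ho : IsOpen Ω)
    (hb : Bornology.IsBounded Ω)
    (hbd : ∀ ζ ∈ frontier Ω, ∀ η : ℝ, 0 < η → ∀ᶠ z in nhdsWithin ζ Ω, f z < η) :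
    ∀ z ∈ Ω, f z ≤ 0 := by
  obtain ⟨hc, hm⟩ := hf
  intro z₀ hz₀
  by_contra! hpos
  -- Superlevel sets are closed in `ℂ`, since `f` has boundary values at most `0`.
  have hcomp : ∀ η : ℝ, 0 < η → IsCompact {z | z ∈ Ω ∧ η ≤ f z} := by
    intro η hη
    refine Metric.isCompact_of_isClosed_isBounded ?_ (hb.subset fun z hz => hz.1)
    refine isClosed_of_closure_subset fun ζ hζ => ?_
    have hζΩ : ζ ∈ closure Ω := closure_mono (fun z hz => hz.1) hζ
    have hfreq : ∃ᶠ z in nhds ζ, z ∈ Ω ∧ η ≤ f z := mem_closure_iff_frequently.1 hζ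
    have key : ¬ ∀ᶠ z in nhdsWithin ζ Ω, f z < η := by
      intro h
      rw [eventually_nhdsWithin_iff] at h
      obtain ⟨z, ⟨h1, h2⟩, h3⟩ := (hfreq.and_eventually h).exists
      exact absurd (h3 h1) (not_lt.2 h2)
    have hζ' : ζ ∈ Ω := by
      by_contra hn
      exact key (hbd ζ ⟨hζΩ, fun h => hn (interior_subset h)⟩ η hη)
    refine ⟨hζ', ?_⟩
    by_contra! hlt
    exact key ((hc ζ hζ').eventually (gt_mem_nhds hlt))
  obtain ⟨z₁, hz₁, hmax⟩ := (hcomp (f z₀) hpos).exists_isMaxOn ⟨z₀, hz₀, le_rfl⟩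
    (hc.mono fun z hz => hz.1)
  have hle : ∀ z ∈ Ω, f z ≤ f z₁ := by
    intro z hz
    rcases le_total (f z₀) (f z) with h | h
    · exact hmax ⟨hz, h⟩
    · exact h.trans hz₁.2
  obtain ⟨z₂, hz₂, hre⟩ := (hcomp (f z₁) (hpos.trans_le hz₁.2)).exists_isMaxOn
    ⟨z₁, hz₁.1, le_rfl⟩ Complex.continuous_re.continuousOn
  have h21 : f z₂ = f z₁ := le_antisymm (hle _ hz₂.1) hz₂.2
  obtain ⟨R, hR, hRs⟩ := Metric.nhds_basis_closedBall.mem_iff.1 (ho.mem_nhds hz₂.1)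
  have hmv := hm z₂ R hR hRs
  have hmem : ∀ t : ℝ, z₂ + (R : ℂ) * Complex.exp ((t : ℂ) * Complex.I) ∈ Ω := by
    intro t
    apply hRs
    simp [Complex.norm_exp_ofReal_mul_I, abs_of_pos hR]
  have hcont : Continuous fun t : ℝ => f (z₂ + (R : ℂ) * Complex.exp ((t : ℂ) * Complex.I)) :=
    hc.comp_continuous (by fun_prop) hmem
  have h2π : (0 : ℝ) < 2 * Real.pi := Real.two_pi_pos
  have hlt : ∫ t in (0 : ℝ)..(2 * Real.pi),
      f (z₂ + (R : ℂ) * Complex.exp ((t : ℂ) * Complex.I)) <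
      ∫ t in (0 : ℝ)..(2 * Real.pi), f z₁ := by
    refine intervalIntegral.integral_lt_integral_of_continuousOn_of_le_of_exists_lt h2π
      hcont.continuousOn continuousOn_const (fun t _ => hle _ (hmem t))
      ⟨0, ⟨le_rfl, h2π.le⟩, ?_⟩
    refine lt_of_le_of_ne (hle _ (hmem 0)) fun heq => ?_
    have := hre (show _ ∈ {z | z ∈ Ω ∧ f z₁ ≤ f z} from ⟨hmem 0, heq.ge⟩)
    simp at this
    linarith
  rw [intervalIntegral.integral_const, sub_zero, smul_eq_mul] at hlt
  have : f z₂ < f z₁ := by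
    rw [hmv, inv_mul_lt_iff₀ h2π]
    exact hlt
  linarith

/-! ### The logarithmic barrier -/

/-- With `q = (1 + s) e`, the point `q` is at distance at least `√(|z - e|² + s²)` from any `z` of
the closed unit disc. -/
lemma norm_sub_sq_exterior {z e : ℂ} {s : ℝ} (he : ‖e‖ = 1) (hz : ‖z‖ ≤ 1) (hs : 0 ≤ s) :
    ‖z - e‖ ^ 2 + s ^ 2 ≤ ‖z - (1 + s) * e‖ ^ 2 := by
  have h1 : e.re ^ 2 + e.im ^ 2 = 1 := by
    have := Complex.sq_norm e
    rw [he, Complex.normSq_apply] at this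
    nlinarith
  have h2 : z.re ^ 2 + z.im ^ 2 ≤ 1 := by
    have := Complex.sq_norm z
    rw [Complex.normSq_apply] at this
    nlinarith [norm_nonneg z]
  have h3 : z.re * e.re + z.im * e.im ≤ 1 := by
    nlinarith [sq_nonneg (z.re - e.re), sq_nonneg (z.im - e.im)]
  rw [Complex.sq_norm, Complex.sq_norm, Complex.normSq_apply, Complex.normSq_apply]
  simp only [Complex.sub_re, Complex.sub_im, Complex.mul_re, Complex.mul_im, Complex.add_re,
    Complex.add_im, Complex.one_re, Complex.one_im, Complex.ofReal_re, Complex.ofReal_im]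
  nlinarith [mul_nonneg hs (sub_nonneg.2 h3)]

/-- A function with the mean value property, bounded by `1` on the part of the unit disc within `s`
of a point `e` of the unit circle and vanishing on the circle there, is at most `6 δ / s` at depth
`δ` below `e`: the barrier `W` takes the value `log ((s + δ)/s) / log √2 < 3 δ / s` at that
point. -/
lemma barrier_bound {u : ℂ → ℝ} {e : ℂ} {s δ : ℝ} (he : ‖e‖ = 1) (hs : 0 < s)
    (hu : HarmonicMVP u (ball 0 1 ∩ ball e s))
    (h1 : ∀ z ∈ ball (0 : ℂ) 1 ∩ ball e s, u z ≤ 1)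
    (h0 : ∀ ζ ∈ closure (ball (0 : ℂ) 1 ∩ ball e s), ‖ζ‖ = 1 → ‖ζ - e‖ < s →
      Filter.Tendsto u (nhdsWithin ζ (ball 0 1 ∩ ball e s)) (nhds 0))
    (hδ : 0 < δ) (hδ1 : δ < 1) (hδs : δ < s) :
    u ((1 - δ : ℝ) * e) ≤ 6 * δ / s := by
  set q : ℂ := (1 + s) * e with hq
  set c : ℝ := Real.log 2 / 2 with hcdef
  have hc : 1 / 3 < c := by
    have := Real.log_two_gt_d9
    rw [hcdef]; linarith
  have hc0 : 0 < c := by linarith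
  set W : ℂ → ℝ := fun z => (Real.log ‖z - q‖ - Real.log s) / c with hW
  have hfar : ∀ z : ℂ, ‖z‖ ≤ 1 → s ≤ ‖z - q‖ := by
    intro z hz
    have := norm_sub_sq_exterior he hz hs.le
    exact le_of_sq_le_sq (by nlinarith [sq_nonneg ‖z - e‖]) (norm_nonneg _)
  have hne : ∀ z : ℂ, ‖z‖ ≤ 1 → z - q ≠ 0 := by
    intro z hz h
    have := hfar z hz
    rw [h, norm_zero] at this
    linarith
  have hWc : ∀ z : ℂ, ‖z‖ ≤ 1 → ContinuousAt W z := by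
    intro z hz
    have : ContinuousAt (fun z : ℂ => Real.log ‖z - q‖) z :=
      ContinuousAt.log (by fun_prop) (norm_ne_zero_iff.2 (hne z hz))
    exact (this.sub continuousAt_const).div_const c
  have hW0 : ∀ z : ℂ, ‖z‖ ≤ 1 → 0 ≤ W z := by
    intro z hz
    exact div_nonneg (sub_nonneg.2 (Real.log_le_log hs (hfar z hz))) hc0.le
  have hW1 : ∀ z : ℂ, ‖z‖ ≤ 1 → s ≤ ‖z - e‖ → 1 ≤ W z := by
    intro z hz hze
    have h := norm_sub_sq_exterior he hz hs.le
    have h2 : 2 * s ^ 2 ≤ ‖z - q‖ ^ 2 := by nlinarith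
    have h3 := Real.log_le_log (by positivity) h2
    rw [Real.log_mul (by norm_num) (by positivity), Real.log_pow, Real.log_pow] at h3
    rw [hW, le_div_iff₀ hc0, hcdef]
    push_cast at h3
    linarith
  have hsub : ∀ z ∈ ball (0 : ℂ) 1 ∩ ball e s, ‖z‖ ≤ 1 := fun z hz => by
    have := hz.1
    rw [mem_ball_zero_iff] at this
    exact this.le
  have hf : HarmonicMVP (fun z => u z - W z) (ball 0 1 ∩ ball e s) := by
    refine ⟨hu.1.sub fun z hz => (hWc z (hsub z hz)).continuousWithinAt, ?_⟩
    intro p R hR hp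
    have hmem : ∀ t : ℝ, p + (R : ℂ) * Complex.exp ((t : ℂ) * Complex.I) ∈
        ball (0 : ℂ) 1 ∩ ball e s := by
      intro t
      apply hp
      simp [Complex.norm_exp_ofReal_mul_I, abs_of_pos hR]
    have hWm : W p = (2 * Real.pi)⁻¹ * ∫ t in (0 : ℝ)..(2 * Real.pi),
        W (p + (R : ℂ) * Complex.exp ((t : ℂ) * Complex.I)) := by
      have hharm : InnerProductSpace.HarmonicOnNhd (fun z : ℂ => Real.log ‖z - q‖)
          (closedBall p |R|) := by
        intro z hz
        rw [abs_of_pos hR] at hz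
        exact AnalyticAt.harmonicAt_log_norm (f := fun z => z - q) (by fun_prop)
          (hne z (hsub z (hp hz)))
      have hav := hharm.circleAverage_eq
      rw [Real.circleAverage_def, smul_eq_mul] at hav
      have hint : IntervalIntegrable (fun t : ℝ =>
          Real.log ‖p + (R : ℂ) * Complex.exp ((t : ℂ) * Complex.I) - q‖)
          MeasureTheory.volume 0 (2 * Real.pi) := by
        refine Continuous.intervalIntegrable (Continuous.log (by fun_prop) fun t => ?_) _ _
        exact norm_ne_zero_iff.2 (hne _ (hsub _ (hmem t)))
      simp only [hW]
      rw [intervalIntegral.integral_div, intervalIntegral.integral_sub hint (by simp),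
        intervalIntegral.integral_const]
      simp only [circleMap] at hav
      rw [← hav, smul_eq_mul, sub_zero]
      have := Real.pi_pos
      rw [mul_div_assoc', mul_sub, inv_mul_cancel_left₀ (by positivity)]
    have hi1 : IntervalIntegrable (fun t : ℝ =>
        u (p + (R : ℂ) * Complex.exp ((t : ℂ) * Complex.I))) MeasureTheory.volume
        0 (2 * Real.pi) :=
      (hu.1.comp_continuous (by fun_prop) hmem).intervalIntegrable _ _
    have hi2 : IntervalIntegrable (fun t : ℝ =>
        W (p + (R : ℂ) * Complex.exp ((t : ℂ) * Complex.I))) MeasureTheory.volume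
        0 (2 * Real.pi) :=
      (ContinuousOn.comp_continuous
        (fun z hz => (hWc z (hsub z hz)).continuousWithinAt) (by fun_prop)
        hmem).intervalIntegrable _ _
    rw [intervalIntegral.integral_sub hi1 hi2, mul_sub, ← hWm, ← hu.2 p R hR hp]
  have hmaxp := hf.nonpos (isOpen_ball.inter isOpen_ball)
    (isBounded_ball.subset inter_subset_left) (by
      intro ζ hζ η hη
      have hζc : ζ ∈ closure (ball (0 : ℂ) 1 ∩ ball e s) := frontier_subset_closure hζ
      have hζ1 : ‖ζ‖ ≤ 1 := by
        have := closure_ball_subset_closedBall (closure_mono inter_subset_left hζc)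
        simpa using this
      have hn : ζ ∉ ball (0 : ℂ) 1 ∩ ball e s := by
        have := hζ.2
        rwa [(isOpen_ball.inter isOpen_ball).interior_eq] at this
      have hWt : Filter.Tendsto W (nhdsWithin ζ (ball 0 1 ∩ ball e s)) (nhds (W ζ)) :=
        (hWc ζ hζ1).continuousWithinAt
      by_cases hζe : ‖ζ - e‖ < s
      · have hζ2 : ‖ζ‖ = 1 := by
          by_contra h
          refine hn ⟨?_, ?_⟩
          · simpa using lt_of_le_of_ne hζ1 h
          · simpa [dist_eq_norm] using hζe
        have ht := (h0 ζ hζc hζ2 hζe).sub hWt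
        exact ht.eventually (gt_mem_nhds (by linarith [hW0 ζ hζ1]))
      · have hw := hW1 ζ hζ1 (not_lt.1 hζe)
        filter_upwards [hWt.eventually (lt_mem_nhds (show 1 - η < W ζ by linarith)),
          self_mem_nhdsWithin] with z hz1 hz2
        linarith [h1 z hz2])
  have hz : ((1 - δ : ℝ) : ℂ) * e ∈ ball (0 : ℂ) 1 ∩ ball e s := by
    constructor
    · rw [mem_ball_zero_iff, norm_mul, he, mul_one, Complex.norm_real, Real.norm_eq_abs,
        abs_of_pos (by linarith)]
      linarith
    · rw [mem_ball, dist_eq_norm, show ((1 - δ : ℝ) : ℂ) * e - e = ((-δ : ℝ) : ℂ) * e by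
        push_cast; ring, norm_mul, he, mul_one, Complex.norm_real, Real.norm_eq_abs, abs_neg,
        abs_of_pos hδ]
      exact hδs
  have hval : ‖((1 - δ : ℝ) : ℂ) * e - q‖ = s + δ := by
    rw [hq, show ((1 - δ : ℝ) : ℂ) * e - (1 + s) * e = ((-(s + δ) : ℝ) : ℂ) * e by
        push_cast; ring, norm_mul, he, mul_one, Complex.norm_real, Real.norm_eq_abs, abs_neg,
        abs_of_pos (by linarith)]
  have hfin := hmaxp _ hz
  simp only [hW] at hfin
  rw [hval, ← Real.log_div (by positivity) hs.ne'] at hfin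
  have hlog : Real.log ((s + δ) / s) ≤ δ / s := by
    have := Real.log_le_sub_one_of_pos (show 0 < (s + δ) / s by positivity)
    rw [add_div, div_self hs.ne'] at this ⊢
    linarith
  have hds : 0 < δ / s := by positivity
  have : Real.log ((s + δ) / s) / c ≤ 6 * δ / s := by
    rw [div_le_iff₀ hc0, mul_div_assoc]
    nlinarith
  linarith

/-! ### Distance to the box and the final integral -/

/-- Points whose arguments differ by `α` are at distance at least `|sin (α/2)|` if one of them is
on the unit circle and the other is not too close to the origin: the squared distance is
`(1 - ρ)² + 4 ρ sin² (α/2)`. -/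
lemma abs_sin_half_le_norm_sub {ρ t τ : ℝ} (hρ : 1 / 2 ≤ ρ) :
    |Real.sin ((t - τ) / 2)| ≤
      ‖(ρ : ℂ) * Complex.exp ((τ : ℂ) * Complex.I) - Complex.exp ((t : ℂ) * Complex.I)‖ := by
  refine abs_le_of_sq_le_sq ?_ (norm_nonneg _)
  have hcos : Real.cos (t - τ) = 1 - 2 * Real.sin ((t - τ) / 2) ^ 2 := by
    have h := Real.cos_two_mul ((t - τ) / 2)
    have h' := Real.sin_sq_add_cos_sq ((t - τ) / 2)
    rw [show 2 * ((t - τ) / 2) = t - τ by ring] at h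
    linarith
  rw [Real.cos_sub] at hcos
  rw [Complex.sq_norm, Complex.normSq_apply]
  simp only [Complex.sub_re, Complex.sub_im, Complex.mul_re, Complex.mul_im, Complex.ofReal_re,
    Complex.ofReal_im, Complex.exp_ofReal_mul_I_re, Complex.exp_ofReal_mul_I_im]
  have e1 := Real.sin_sq_add_cos_sq t
  have e2 := Real.sin_sq_add_cos_sq τ
  have key : (ρ * Real.cos τ - 0 * Real.sin τ - Real.cos t) *
      (ρ * Real.cos τ - 0 * Real.sin τ - Real.cos t) +
      (ρ * Real.sin τ + 0 * Real.cos τ - Real.sin t) *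
      (ρ * Real.sin τ + 0 * Real.cos τ - Real.sin t) =
      (1 - ρ) ^ 2 + 4 * ρ * Real.sin ((t - τ) / 2) ^ 2 := by
    linear_combination ρ ^ 2 * e2 + e1 - 2 * ρ * hcos
  rw [key]
  nlinarith [sq_nonneg (1 - ρ), sq_nonneg (Real.sin ((t - τ) / 2))]

lemma div_pi_le_sin_half {m x : ℝ} (h1 : m ≤ x) (h2 : x ≤ 2 * Real.pi - m) (hm : 0 ≤ m) :
    m / Real.pi ≤ Real.sin (x / 2) := by
  have hpi := Real.pi_pos
  rcases le_total (x / 2) (Real.pi / 2) with h | h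
  · have := Real.mul_le_sin (x := x / 2) (by linarith) h
    refine le_trans ?_ this
    rw [show 2 / Real.pi * (x / 2) = x / Real.pi by ring]
    gcongr
  · have := Real.mul_le_sin (x := Real.pi - x / 2) (by linarith) (by linarith)
    rw [Real.sin_pi_sub] at this
    refine le_trans ?_ this
    rw [show 2 / Real.pi * (Real.pi - x / 2) = (2 * Real.pi - x) / Real.pi by ring]
    gcongr
    linarith

/-- The integral is `log ((L + ε)/ε)`, and `L + ε ≤ 8 ≤ (1/ε)³`. -/
lemma integral_inv_shift {L ε : ℝ} (hL : 0 ≤ L) (hL' : L ≤ 2 * Real.pi) (hε : 0 < ε)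
    (hε' : ε < 1 / 2) :
    ∫ x in (0 : ℝ)..L, (x + ε)⁻¹ ≤ 4 * Real.log (1 / ε) := by
  rw [intervalIntegral.integral_comp_add_right (fun x => x⁻¹) ε, zero_add,
    integral_inv_of_pos hε (by linarith)]
  have h8 : (L + ε) / ε ≤ (1 / ε) ^ 4 := by
    have h1 : L + ε ≤ 8 := by linarith [Real.pi_lt_d2]
    have h2 : (2 : ℝ) ≤ 1 / ε := by
      rw [le_div_iff₀ hε]; linarith
    have h3 : (8 : ℝ) ≤ (1 / ε) ^ 3 := by
      calc (8 : ℝ) = 2 ^ 3 := by norm_num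
        _ ≤ _ := by gcongr
    calc (L + ε) / ε = (L + ε) * (1 / ε) := by ring
      _ ≤ (1 / ε) ^ 3 * (1 / ε) := by gcongr; linarith
      _ = _ := by ring
  have := Real.log_le_log (by positivity) h8
  rw [Real.log_pow] at this
  exact_mod_cast this

/-- Lemma 5.5: there is a universal constant `C` such that for `0 < θ < π`, `0 < ε < 1/2`
and `D = 𝔻 ∖ {re^{it} : −θ ≤ t ≤ θ, 1−ε ≤ r < 1}`, the harmonic measure of
`A = ∂D ∖ ∂𝔻` in `D` at `0` is at most `θ/π + Cε log(1/ε)`: every harmonic `u` on `D` with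
`0 ≤ u ≤ 1` and boundary limit `0` at every point of `∂D ∩ ∂𝔻` other than `e^{±iθ}`
satisfies `u(0) ≤ θ/π + Cε log(1/ε)`. -/
theorem harmonic_measure_estimate :
    ∃ C : ℝ, 0 < C ∧ ∀ θ ε : ℝ, 0 < θ → θ < Real.pi → 0 < ε → ε < 1 / 2 →
      ∀ D : Set ℂ,
        D = ball (0 : ℂ) 1 \
          {w : ℂ | ∃ ρ t : ℝ, 1 - ε ≤ ρ ∧ ρ < 1 ∧ -θ ≤ t ∧ t ≤ θ ∧
            w = (ρ : ℂ) * Complex.exp ((t : ℂ) * Complex.I)} →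
      ∀ u : ℂ → ℝ, HarmonicMVP u D → (∀ z ∈ D, 0 ≤ u z ∧ u z ≤ 1) →
        (∀ ζ ∈ (frontier D ∩ sphere (0 : ℂ) 1) \
            {Complex.exp ((θ : ℂ) * Complex.I), Complex.exp (-(θ : ℂ) * Complex.I)},
          Filter.Tendsto u (nhdsWithin ζ D) (nhds 0)) →
      u 0 ≤ θ / Real.pi + C * ε * Real.log (1 / ε) := by
  refine ⟨80, by norm_num, ?_⟩
  intro θ ε hθ hθπ hε hε2 D hD u hu hu01 hu0
  have hpi := Real.pi_pos
  -- Everything below the inner edge of the box lies in `D`.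
  have hDin : ∀ z : ℂ, ‖z‖ < 1 - ε → z ∈ D := by
    intro z hz
    rw [hD]
    refine ⟨by rw [mem_ball_zero_iff]; linarith, ?_⟩
    rintro ⟨ρ, t, h1, h2, -, -, rfl⟩
    rw [norm_mul, Complex.norm_exp_ofReal_mul_I, mul_one, Complex.norm_real,
      Real.norm_eq_abs, abs_of_pos (by linarith)] at hz
    linarith
  have hpt : ∀ t : ℝ, ((1 - 2 * ε : ℝ) : ℂ) * Complex.exp ((t : ℂ) * Complex.I) ∈ D := by
    intro t
    apply hDin
    rw [norm_mul, Complex.norm_exp_ofReal_mul_I, mul_one, Complex.norm_real,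
      Real.norm_eq_abs, abs_of_pos (by linarith)]
    linarith
  set g : ℝ → ℝ := fun t => u (((1 - 2 * ε : ℝ) : ℂ) * Complex.exp ((t : ℂ) * Complex.I))
    with hg
  have hgc : Continuous g := hu.1.comp_continuous (by fun_prop) hpt
  have hmean : u 0 = (2 * Real.pi)⁻¹ * ∫ t in (0 : ℝ)..(2 * Real.pi), g t := by
    have := hu.2 0 (1 - 2 * ε) (by linarith) (by
      intro z hz
      rw [mem_closedBall_zero_iff] at hz
      exact hDin z (by linarith))
    simpa only [zero_add] using this
  have hg1 : ∀ t, g t ≤ 1 := fun t => (hu01 _ (hpt t)).2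
  have hest : ∀ t ∈ Ioo θ (2 * Real.pi - θ),
      g t ≤ 40 * ε * (t - θ + ε)⁻¹ + 40 * ε * (2 * Real.pi - θ - t + ε)⁻¹ := by
    rintro t ⟨ht1, ht2⟩
    have hmain : ∀ m : ℝ, 0 < m → m ≤ t - θ → m ≤ 2 * Real.pi - θ - t →
        g t ≤ 40 * ε * (m + ε)⁻¹ := by
      intro m hm hma hmb
      rw [← div_eq_mul_inv]
      have hs : 0 < m / Real.pi := by positivity
      -- When `m = O(ε)` the trivial bound `u ≤ 1` suffices, and otherwise `2 ε < m/π`, so that the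
      -- evaluation point is inside the disc about `e`.
      by_cases hsmall : m ≤ 39 * ε
      · refine (hg1 t).trans ?_
        rw [le_div_iff₀ (by positivity)]
        linarith
      push Not at hsmall
      set e := Complex.exp ((t : ℂ) * Complex.I) with hedef
      have he : ‖e‖ = 1 := Complex.norm_exp_ofReal_mul_I t
      have hbox : ∀ ρ τ : ℝ, 1 / 2 ≤ ρ → -θ ≤ τ → τ ≤ θ →
          m / Real.pi ≤ ‖(ρ : ℂ) * Complex.exp ((τ : ℂ) * Complex.I) - e‖ := by
        intro ρ τ h1 h2 h3
        refine (div_pi_le_sin_half (x := t - τ) (by linarith) (by linarith) hm.le).trans ?_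
        exact (le_abs_self _).trans (abs_sin_half_le_norm_sub h1)
      have hΩD : ball (0 : ℂ) 1 ∩ ball e (m / Real.pi) ⊆ D := by
        rintro z ⟨hz1, hz2⟩
        rw [hD]
        refine ⟨hz1, ?_⟩
        rintro ⟨ρ, τ, h1, h2, h3, h4, rfl⟩
        rw [mem_ball, dist_eq_norm] at hz2
        exact absurd hz2 (not_lt.2 (hbox ρ τ (by linarith) h3 h4))
      have hbar := barrier_bound (u := u) (δ := 2 * ε) he hs
        ⟨hu.1.mono hΩD, fun p R hR hp => hu.2 p R hR (hp.trans hΩD)⟩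
        (fun z hz => (hu01 z (hΩD hz)).2)
        (by
          intro ζ hζc hζ1 hζe
          refine (hu0 ζ ⟨⟨⟨closure_mono hΩD hζc, fun h => ?_⟩, by simpa using hζ1⟩, ?_⟩).mono_left
            (nhdsWithin_mono _ hΩD)
          · have h' := interior_subset h
            rw [hD] at h'
            have := h'.1
            rw [mem_ball_zero_iff] at this
            linarith
          · rintro (h | h)
            · have := hbox 1 θ (by norm_num) (by linarith) le_rfl
              rw [Complex.ofReal_one, one_mul, ← h] at this
              linarith
            · have := hbox 1 (-θ) (by norm_num) le_rfl (by linarith)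
              rw [mem_singleton_iff] at h
              rw [Complex.ofReal_one, one_mul, Complex.ofReal_neg, ← h] at this
              linarith)
        (by linarith) (by linarith)
        (by
          rw [lt_div_iff₀ hpi]
          nlinarith [Real.pi_lt_d2])
      refine hbar.trans ?_
      rw [div_div_eq_mul_div, div_le_div_iff₀ hm (by positivity)]
      have h1 : 6 * (2 * ε) * Real.pi ≤ 38 * ε := by nlinarith [Real.pi_lt_d2]
      nlinarith [mul_pos hε hm]
    have hp1 : 0 < 40 * ε * (t - θ + ε)⁻¹ :=
      mul_pos (by positivity) (inv_pos.2 (by linarith))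
    have hp2 : 0 < 40 * ε * (2 * Real.pi - θ - t + ε)⁻¹ :=
      mul_pos (by positivity) (inv_pos.2 (by linarith))
    rcases le_total (t - θ) (2 * Real.pi - θ - t) with h | h
    · linarith [hmain (t - θ) (by linarith) le_rfl h]
    · linarith [hmain (2 * Real.pi - θ - t) (by linarith) h le_rfl]
  have hI : ∀ a b, IntervalIntegrable g MeasureTheory.volume a b :=
    fun a b => hgc.intervalIntegrable a b
  have hsplit : ∫ t in (0 : ℝ)..(2 * Real.pi), g t = (∫ t in (0 : ℝ)..θ, g t) +
      (∫ t in θ..(2 * Real.pi - θ), g t) + ∫ t in (2 * Real.pi - θ)..(2 * Real.pi), g t := by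
    rw [intervalIntegral.integral_add_adjacent_intervals (hI _ _) (hI _ _),
      intervalIntegral.integral_add_adjacent_intervals (hI _ _) (hI _ _)]
  have hA : ∫ t in (0 : ℝ)..θ, g t ≤ θ := by
    have := intervalIntegral.integral_mono_on (μ := MeasureTheory.volume) hθ.le (hI 0 θ)
      (intervalIntegrable_const (c := (1 : ℝ))) (fun t _ => hg1 t)
    simpa using this
  have hB : ∫ t in (2 * Real.pi - θ)..(2 * Real.pi), g t ≤ θ := by
    have := intervalIntegral.integral_mono_on (μ := MeasureTheory.volume)
      (show 2 * Real.pi - θ ≤ 2 * Real.pi by linarith) (hI _ _)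
      (intervalIntegrable_const (c := (1 : ℝ))) (fun t _ => hg1 t)
    simpa using this
  have hM : ∫ t in θ..(2 * Real.pi - θ), g t ≤ 320 * ε * Real.log (1 / ε) := by
    have hle : θ ≤ 2 * Real.pi - θ := by linarith
    have hi1 : IntervalIntegrable (fun t : ℝ => 40 * ε * (t - θ + ε)⁻¹) MeasureTheory.volume
        θ (2 * Real.pi - θ) := by
      refine ContinuousOn.intervalIntegrable ?_
      rw [uIcc_of_le hle]
      refine continuousOn_const.mul (ContinuousOn.inv₀ (by fun_prop) ?_)
      intro t ht
      have := ht.1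
      linarith
    have hi2 : IntervalIntegrable (fun t : ℝ => 40 * ε * (2 * Real.pi - θ - t + ε)⁻¹)
        MeasureTheory.volume θ (2 * Real.pi - θ) := by
      refine ContinuousOn.intervalIntegrable ?_
      rw [uIcc_of_le hle]
      refine continuousOn_const.mul (ContinuousOn.inv₀ (by fun_prop) ?_)
      intro t ht
      have := ht.2
      linarith
    have hmono := intervalIntegral.integral_mono_on_of_le_Ioo hle (hI _ _) (hi1.add hi2) hest
    have hL := integral_inv_shift (L := 2 * Real.pi - θ - θ) (by linarith) (by linarith) hε hε2
    have e1 : ∫ t in θ..(2 * Real.pi - θ), (t - θ + ε)⁻¹ =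
        ∫ x in (0 : ℝ)..(2 * Real.pi - θ - θ), (x + ε)⁻¹ := by
      rw [intervalIntegral.integral_comp_sub_right (fun x => (x + ε)⁻¹) θ, sub_self]
    have e2 : ∫ t in θ..(2 * Real.pi - θ), (2 * Real.pi - θ - t + ε)⁻¹ =
        ∫ x in (0 : ℝ)..(2 * Real.pi - θ - θ), (x + ε)⁻¹ := by
      rw [intervalIntegral.integral_comp_sub_left (fun x => (x + ε)⁻¹) (2 * Real.pi - θ),
        sub_self]
    rw [intervalIntegral.integral_add hi1 hi2, intervalIntegral.integral_const_mul,
      intervalIntegral.integral_const_mul, e1, e2] at hmono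
    nlinarith
  have hlogpos : 0 < Real.log (1 / ε) := by
    apply Real.log_pos
    rw [lt_div_iff₀ hε]
    linarith
  rw [hmean, hsplit, inv_mul_le_iff₀ (by positivity)]
  have hexp : 2 * Real.pi * (θ / Real.pi + 80 * ε * Real.log (1 / ε)) =
      2 * θ + 160 * Real.pi * (ε * Real.log (1 / ε)) := by
    field_simp
    ring
  rw [hexp]
  have hpos : 0 < ε * Real.log (1 / ε) := mul_pos hε hlogpos
  nlinarith [Real.pi_gt_three]
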